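/- arXiv:1308.1212 — 3 statements merged into one kernel-verified Lean document; each statement's English description precedes it below -/
import Mathlib

section
/- Fix integers m ≥ 2 and d ≥ 0 and a real α ∈ (0, 1). For each n, let r_n = ⌈αn⌉, let π be a uniformly random permutation of {1, …, n}, let p(i) = |{j ≤ i : π(j) ≥ π(i)}|, and let S_n = |{i : r_n < i ≤ n, p(i) ≤ m−1}|. Then lim_{n→∞} Pr(S_n = d) = α^{m−1} · ((m−1)·ln(1/α))^d / d!. -/
open scoped Classical

open Filter Topology Finset Polynomial
open scoped Nat

/-!
Building a permutation one position at a time shows that the relative ranks are independent, the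
one at (0-based) position `i` being uniform on `{1, …, i + 1}`. The generating function of `S_n` is
therefore the product of the `i + 1` over `i < r_n` and of the `k X + (i + 1 - k)` over
`r_n ≤ i < n`, where `k = m - 1`. Its `d`-th coefficient is a constant, asymptotic to `α ^ k * n!`,
times the `d`-th elementary symmetric function of the odds `k / (i + 1 - k)`. The odds are uniformly
small and their sum is a difference of harmonic numbers tending to `k log (1 / α)`, so by Newton's
identities that function tends to `(k log (1 / α)) ^ d / d!`.
-/

section ElementarySymmetric

variable {ι β R : Type*}

theorem coeff_prod_one_add_C_mul_X [CommSemiring R] (s : Finset ι) (f : ι → R) (d : ℕ) :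
    (∏ i ∈ s, (1 + C (f i) * X)).coeff d = (s.val.map f).esymm d := by
  simp only [prod_one_add, prod_mul_distrib, prod_const, ← map_prod, finsetSum_coeff,
    coeff_C_mul_X_pow, esymm_map_val, powersetCard_eq_filter, sum_filter, eq_comm]

theorem coeff_prod_C_mul_X_add_C [Field R] {s : Finset ι} {a b : ι → R} (hb : ∀ i ∈ s, b i ≠ 0)
    (d : ℕ) : (∏ i ∈ s, (C (a i) * X + C (b i))).coeff d =
      (∏ i ∈ s, b i) * (s.val.map fun i => a i / b i).esymm d := by
  have hfactor : ∀ i ∈ s, C (a i) * X + C (b i) = C (b i) * (1 + C (a i / b i) * X) := by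
    intro i hi
    rw [mul_add, mul_one, ← mul_assoc, ← C_mul, mul_div_cancel₀ _ (hb i hi), add_comm]
  rw [prod_congr rfl hfactor, prod_mul_distrib, ← map_prod, coeff_C_mul,
    coeff_prod_one_add_C_mul_X]

theorem mvPolynomial_succ_mul_esymm_succ [CommRing R] (σ : Type*) [Fintype σ] (d : ℕ) :
    (d + 1) * MvPolynomial.esymm σ R (d + 1) =
      ∑ j ∈ range (d + 1),
        (-1) ^ j * MvPolynomial.esymm σ R (d - j) * MvPolynomial.psum σ R (j + 1) := by
  have newton := MvPolynomial.mul_esymm_eq_sum σ R (d + 1)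
  rw [sum_filter, Nat.sum_antidiagonal_eq_sum_range_succ_mk, sum_range_succ, if_neg (lt_irrefl _),
    add_zero, ← sum_range_reflect, mul_sum] at newton
  rw [← Nat.cast_add_one, newton]
  refine sum_congr rfl fun j hj => ?_
  obtain ⟨i, rfl⟩ := Nat.exists_eq_add_of_le (mem_range_succ_iff.1 hj)
  have hreflect : j + i + 1 - 1 - j = i := by omega
  have hdegree : j + i + 1 - i = j + 1 := by omega
  have hsign : (-1 : MvPolynomial σ R) ^ (j + i + 1 + 1) * (-1) ^ i = (-1) ^ j := by
    rw [← pow_add, show j + i + 1 + 1 + i = j + 2 * (i + 1) by ring, pow_add, pow_mul]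
    simp
  rw [hreflect, if_pos (by omega), hdegree, add_tsub_cancel_left, ← hsign]
  ring

theorem succ_mul_esymm_succ [CommRing R] (s : Finset ι) (f : ι → R) (d : ℕ) :
    (d + 1) * (s.val.map f).esymm (d + 1) =
      ∑ j ∈ range (d + 1), (-1) ^ j * (s.val.map f).esymm (d - j) * ∑ i ∈ s, f i ^ (j + 1) := by
  have hmap : (univ : Finset s).val.map (fun i : s => f i) = s.val.map f :=
    Multiset.attach_map_val' s.val f
  have hpsum (j : ℕ) : ∑ i : s, f i ^ j = ∑ i ∈ s, f i ^ j := sum_coe_sort s (f · ^ j)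
  simpa only [map_mul, map_add, map_natCast, map_one, map_sum, map_pow, map_neg, hmap, hpsum,
    MvPolynomial.aeval_esymm_eq_multiset_esymm, MvPolynomial.psum, MvPolynomial.aeval_X] using
    congrArg (MvPolynomial.aeval fun i : s => f i) (mvPolynomial_succ_mul_esymm_succ (R := R) s d)

theorem tendsto_esymm_of_tendsto_powerSums [Field R] [CharZero R] [TopologicalSpace R]
    [IsTopologicalRing R] {l : Filter β} {s : β → Finset ι} {f : β → ι → R} {L : R}
    (hsum : Tendsto (fun b => ∑ i ∈ s b, f b i) l (𝓝 L))
    (hpow : ∀ j, Tendsto (fun b => ∑ i ∈ s b, f b i ^ (j + 2)) l (𝓝 0)) (d : ℕ) :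
    Tendsto (fun b => ((s b).val.map (f b)).esymm d) l (𝓝 (L ^ d / d !)) := by
  induction d using Nat.strong_induction_on with
  | _ d ih =>
  rcases d with _ | d
  · simp [Multiset.esymm, tendsto_const_nhds]
  have hd : (d + 1 : R) ≠ 0 := d.cast_add_one_ne_zero
  have hhigher : Tendsto (fun b => ∑ j ∈ range d, (-1) ^ (j + 1) *
      ((s b).val.map (f b)).esymm (d - (j + 1)) * ∑ i ∈ s b, f b i ^ (j + 2)) l (𝓝 0) := by
    rw [← sum_const_zero (s := range d)]
    refine tendsto_finsetSum _ fun j _ => ?_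
    simpa using ((ih (d - (j + 1)) (by omega)).const_mul ((-1) ^ (j + 1))).mul (hpow j)
  have hlim := (hhigher.add ((ih d d.lt_succ_self).mul hsum)).const_mul (d + 1 : R)⁻¹
  convert hlim using 2 with b
  · rw [← inv_mul_cancel_left₀ hd (Multiset.esymm _ (d + 1)), succ_mul_esymm_succ, sum_range_succ']
    simp
  · rw [Nat.factorial_succ]
    push_cast
    field_simp
    ring

/-- Divided by `∏ (1 + f i)`, the `d`-th elementary symmetric function is the probability of exactly
`d` successes in independent trials with odds `f i`, so this is a Poisson limit theorem. -/
theorem tendsto_esymm_of_tendsto_sum {l : Filter β} {s : β → Finset ι} {f : β → ι → ℝ}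
    {ε : β → ℝ} {L : ℝ} (hf : ∀ᶠ b in l, ∀ i ∈ s b, 0 ≤ f b i ∧ f b i ≤ ε b)
    (hε : Tendsto ε l (𝓝 0)) (hsum : Tendsto (fun b => ∑ i ∈ s b, f b i) l (𝓝 L)) (d : ℕ) :
    Tendsto (fun b => ((s b).val.map (f b)).esymm d) l (𝓝 (L ^ d / d !)) := by
  refine tendsto_esymm_of_tendsto_powerSums hsum (fun j => ?_) d
  have hbound : Tendsto (fun b => ε b ^ (j + 1) * ∑ i ∈ s b, f b i) l (𝓝 0) := by
    simpa using (hε.pow (j + 1)).mul hsum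
  refine squeeze_zero' ?_ ?_ hbound
  · filter_upwards [hf] with b hb
    exact sum_nonneg fun i hi => pow_nonneg (hb i hi).1 _
  · filter_upwards [hf] with b hb
    rw [mul_sum]
    refine sum_le_sum fun i hi => ?_
    obtain ⟨hnonneg, hle⟩ := hb i hi
    rw [pow_succ]
    gcongr

end ElementarySymmetric

section RelativeRanks

variable {n r k : ℕ}

/-- The permutation of `Fin (n + 1)` whose last value is `v` and whose earlier values are in the
same relative order as those of `σ`. -/
def permSnoc (v : Fin (n + 1)) (σ : Equiv.Perm (Fin n)) : Equiv.Perm (Fin (n + 1)) :=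
  finSuccEquivLast.trans ((Equiv.optionCongr σ).trans (finSuccEquiv' v).symm)

@[simp]
theorem permSnoc_last (v : Fin (n + 1)) (σ : Equiv.Perm (Fin n)) :
    permSnoc v σ (Fin.last n) = v := by
  simp [permSnoc]

@[simp]
theorem permSnoc_castSucc (v : Fin (n + 1)) (σ : Equiv.Perm (Fin n)) (i : Fin n) :
    permSnoc v σ i.castSucc = v.succAbove (σ i) := by
  simp [permSnoc]

theorem bijective_permSnoc :
    Function.Bijective fun p : Fin (n + 1) × Equiv.Perm (Fin n) => permSnoc p.1 p.2 := by
  rw [Fintype.bijective_iff_injective_and_card]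
  refine ⟨?_, by simp [Fintype.card_perm, Nat.factorial_succ]⟩
  rintro ⟨v, σ⟩ ⟨w, τ⟩ h
  obtain rfl : v = w := by simpa using Equiv.congr_fun h (Fin.last n)
  refine Prod.ext rfl (Equiv.ext fun i => ?_)
  simpa using Equiv.congr_fun h i.castSucc

/-- The relative rank of position `i` in `π`, counted from the top: the largest value so far has
relative rank `1`. -/
def relRank (π : Equiv.Perm (Fin n)) (i : Fin n) : ℕ :=
  #{j : Fin n | j ≤ i ∧ π i ≤ π j}

theorem relRank_permSnoc_castSucc (v : Fin (n + 1)) (σ : Equiv.Perm (Fin n)) (i : Fin n) :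
    relRank (permSnoc v σ) i.castSucc = relRank σ i := by
  simp only [relRank, card_filter, Fin.sum_univ_castSucc]
  simp [-sum_boole]

theorem relRank_permSnoc_last (v : Fin (n + 1)) (σ : Equiv.Perm (Fin n)) :
    relRank (permSnoc v σ) (Fin.last n) = v.rev + 1 := by
  have hcard : #{j | v ≤ permSnoc v σ j} = #{w | v ≤ w} :=
    card_equiv (permSnoc v σ) (by simp)
  simp only [relRank, permSnoc_last, Fin.le_last, true_and, hcard, filter_le_eq_Ici, Fin.card_Ici,
    Fin.val_rev]
  omega

/-- Tested against products, the relative ranks are seen to be independent, the one at position `i`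
being uniform on `{1, …, i + 1}`. -/
theorem sum_perm_prod_relRank {R : Type*} [CommSemiring R] (f : ℕ → ℕ → R) (n : ℕ) :
    ∑ π : Equiv.Perm (Fin n), ∏ i : Fin n, f i (relRank π i) =
      ∏ i ∈ range n, ∑ c ∈ range (i + 1), f i (c + 1) := by
  induction n with
  | zero => simp
  | succ n ih =>
    have hlast : ∑ v : Fin (n + 1), f n (v.rev + 1) = ∑ c ∈ range (n + 1), f n (c + 1) := by
      rw [← Fin.sum_univ_eq_sum_range (fun c => f n (c + 1))]
      exact Equiv.sum_comp Fin.revPerm fun v : Fin (n + 1) => f n (v + 1)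
    rw [prod_range_succ, ← ih, ← hlast, ← bijective_permSnoc.sum_comp, Fintype.sum_prod_type_right,
      sum_mul_sum]
    simp only [Fin.prod_univ_castSucc, relRank_permSnoc_castSucc, relRank_permSnoc_last,
      Fin.val_castSucc, Fin.val_last]

/-- The number `S_n` of (0-based) positions `i ≥ r` whose relative rank is at most `k`. -/
def lateCount (r k : ℕ) (π : Equiv.Perm (Fin n)) : ℕ :=
  #{i : Fin n | r ≤ (i : ℕ) ∧ relRank π i ≤ k}

theorem sum_range_ite_succ_le {R : Type*} [CommRing R] (x : R) {N : ℕ} (hk : k ≤ N) :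
    ∑ c ∈ range N, (if c + 1 ≤ k then x else 1) = k * x + (N - k) := by
  have hlt : ∀ c ∈ Ico k N, ¬ c + 1 ≤ k := by grind
  have hle : ∀ c ∈ range k, c + 1 ≤ k := by grind
  rw [← sum_range_add_sum_Ico _ hk, sum_congr rfl fun c hc => if_pos (hle c hc),
    sum_congr rfl fun c hc => if_neg (hlt c hc)]
  simp [Nat.cast_sub hk]

theorem sum_pow_lateCount {R : Type*} [CommRing R] (x : R) (hkr : k ≤ r) (hrn : r ≤ n) :
    ∑ π : Equiv.Perm (Fin n), x ^ lateCount r k π =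
      r ! * ∏ i ∈ Ico r n, (k * x + (i + 1 - k)) := by
  have hpow (π : Equiv.Perm (Fin n)) :
      x ^ lateCount r k π = ∏ i : Fin n, if r ≤ (i : ℕ) ∧ relRank π i ≤ k then x else 1 := by
    simp [lateCount, prod_ite]
  simp only [hpow]
  rw [sum_perm_prod_relRank fun i c => if r ≤ i ∧ c ≤ k then x else 1,
    ← prod_range_mul_prod_Ico _ hrn, ← prod_range_add_one_eq_factorial, Nat.cast_prod]
  congr 1
  · refine prod_congr rfl fun i hi => ?_
    simp [(mem_range.1 hi).not_ge]
  · refine prod_congr rfl fun i hi => ?_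
    have hri : r ≤ i := (mem_Ico.1 hi).1
    simpa [hri] using sum_range_ite_succ_le x (by omega : k ≤ i + 1)

theorem prod_Ico_mul_descFactorial {R : Type*} [CommRing R] (hkr : k ≤ r) (hrn : r ≤ n) :
    r ! * (∏ i ∈ Ico r n, ((i : R) + 1 - k)) * n.descFactorial k = n ! * r.descFactorial k := by
  induction n, hrn using Nat.le_induction with
  | base => simp
  | succ n hrn ih =>
    have hdesc : ((n : R) + 1 - k) * (n + 1).descFactorial k = (n + 1) * n.descFactorial k := by
      have := congrArg (Nat.cast : ℕ → R) (n.succ_descFactorial k)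
      rw [Nat.cast_mul, Nat.cast_mul, Nat.cast_sub (by omega)] at this
      exact_mod_cast this
    rw [prod_Ico_succ_top hrn, Nat.factorial_succ]
    push_cast
    linear_combination (r ! * ∏ i ∈ Ico r n, ((i : R) + 1 - k)) * hdesc + (n + 1) * ih

/-- The odds that the (0-based) position `i` has relative rank at most `k`; meaningful for
`k ≤ i` only. -/
noncomputable def rankOdds (k i : ℕ) : ℝ :=
  k / (i + 1 - k)

theorem card_lateCount_eq (hkr : k ≤ r) (hrn : r ≤ n) (d : ℕ) :
    (#{π : Equiv.Perm (Fin n) | lateCount r k π = d} : ℝ) =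
      r ! * (∏ i ∈ Ico r n, ((i : ℝ) + 1 - k)) * ((Ico r n).val.map (rankOdds k)).esymm d := by
  have hne : ∀ i ∈ Ico r n, (i : ℝ) + 1 - k ≠ 0 := fun i hi => by
    have : (k : ℝ) ≤ i := by exact_mod_cast hkr.trans (mem_Ico.1 hi).1
    linarith
  calc (#{π : Equiv.Perm (Fin n) | lateCount r k π = d} : ℝ)
      = (∑ π : Equiv.Perm (Fin n), (X : ℝ[X]) ^ lateCount r k π).coeff d := by
        simp [coeff_X_pow, eq_comm]
    _ = r ! * (∏ i ∈ Ico r n, (C (k : ℝ) * X + C ((i : ℝ) + 1 - k))).coeff d := by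
        simp [sum_pow_lateCount X hkr hrn]
    _ = r ! * (∏ i ∈ Ico r n, ((i : ℝ) + 1 - k)) * ((Ico r n).val.map (rankOdds k)).esymm d := by
        rw [coeff_prod_C_mul_X_add_C hne, mul_assoc]
        rfl

theorem card_lateCount_eq_div_factorial (hkr : k ≤ r) (hrn : r ≤ n) (d : ℕ) :
    (#{π : Equiv.Perm (Fin n) | lateCount r k π = d} : ℝ) / n ! =
      r.descFactorial k / n.descFactorial k * ((Ico r n).val.map (rankOdds k)).esymm d := by
  have hdesc : (n.descFactorial k : ℝ) ≠ 0 :=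
    Nat.cast_ne_zero.2 (Nat.descFactorial_pos.2 (hkr.trans hrn)).ne'
  rw [card_lateCount_eq hkr hrn, div_mul_eq_mul_div, div_eq_div_iff (by positivity) hdesc,
    mul_right_comm, prod_Ico_mul_descFactorial hkr hrn]
  ring

theorem sum_rankOdds (hkr : k ≤ r) (hrn : r ≤ n) :
    ∑ i ∈ Ico r n, rankOdds k i = k * ((harmonic (n - k) : ℝ) - harmonic (r - k)) := by
  induction n, hrn using Nat.le_induction with
  | base => simp
  | succ n hrn ih =>
    rw [sum_Ico_succ_top hrn, ih, Nat.succ_sub (hkr.trans hrn), harmonic_succ, rankOdds]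
    push_cast [Nat.cast_sub (hkr.trans hrn)]
    ring

end RelativeRanks

section Asymptotics

variable {r : ℕ → ℕ} {α : ℝ}

theorem tendsto_atTop_of_tendsto_div (hα : 0 < α)
    (hr : Tendsto (fun n => (r n : ℝ) / n) atTop (𝓝 α)) : Tendsto r atTop atTop := by
  refine tendsto_natCast_atTop_iff.1
    ((hr.pos_mul_atTop hα tendsto_natCast_atTop_atTop).congr' ?_)
  filter_upwards [eventually_ne_atTop 0] with n hn
  exact div_mul_cancel₀ _ (Nat.cast_ne_zero.2 hn)

theorem tendsto_sub_div_sub (hα : 0 < α) (hr : Tendsto (fun n => (r n : ℝ) / n) atTop (𝓝 α))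
    (k : ℕ) : Tendsto (fun n => ((r n - k : ℕ) : ℝ) / (n - k : ℕ)) atTop (𝓝 α) := by
  have hk : Tendsto (fun n : ℕ => (k : ℝ) / n) atTop (𝓝 0) :=
    tendsto_const_div_atTop_nhds_zero_nat _
  have hlim : Tendsto (fun n : ℕ => ((r n : ℝ) / n - k / n) / (1 - k / n)) atTop (𝓝 α) := by
    simpa using! (hr.sub hk).div (hk.const_sub 1) (by norm_num)
  refine hlim.congr' ?_
  filter_upwards [eventually_ge_atTop k, eventually_ne_atTop 0,
    (tendsto_atTop_of_tendsto_div hα hr).eventually_ge_atTop k] with n hkn hn hkr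
  have hn' : (n : ℝ) ≠ 0 := Nat.cast_ne_zero.2 hn
  rw [Nat.cast_sub hkr, Nat.cast_sub hkn, ← sub_div, one_sub_div hn', div_div_div_cancel_right₀ hn']

theorem tendsto_descFactorial_div_descFactorial (hα : 0 < α)
    (hr : Tendsto (fun n => (r n : ℝ) / n) atTop (𝓝 α)) (k : ℕ) :
    Tendsto (fun n => ((r n).descFactorial k : ℝ) / n.descFactorial k) atTop (𝓝 (α ^ k)) := by
  induction k with
  | zero => simp
  | succ k ih =>
    simpa only [pow_succ', Nat.descFactorial_succ, Nat.cast_mul, mul_div_mul_comm] using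
      (tendsto_sub_div_sub hα hr k).mul ih

theorem tendsto_harmonic_sub_harmonic {ι : Type*} {l : Filter ι} {u v : ι → ℕ}
    (hα : 0 < α) (hu : Tendsto u l atTop) (hv : Tendsto v l atTop)
    (huv : Tendsto (fun b => (u b : ℝ) / v b) l (𝓝 α)) :
    Tendsto (fun b => (harmonic (v b) : ℝ) - harmonic (u b)) l (𝓝 (Real.log (1 / α))) := by
  have hγ := Real.tendsto_harmonic_sub_log
  have hlim := ((hγ.comp hv).sub (hγ.comp hu)).sub (huv.log hα.ne')
  rw [sub_self, zero_sub, ← Real.log_inv, ← one_div] at hlim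
  refine hlim.congr' ?_
  filter_upwards [hu.eventually_ne_atTop 0, hv.eventually_ne_atTop 0] with b hub hvb
  rw [Real.log_div (Nat.cast_ne_zero.2 hub) (Nat.cast_ne_zero.2 hvb)]
  simp only [Function.comp_apply]
  ring

theorem tendsto_sum_rankOdds (hα : 0 < α) (hrn : ∀ᶠ n in atTop, r n ≤ n)
    (hr : Tendsto (fun n => (r n : ℝ) / n) atTop (𝓝 α)) (k : ℕ) :
    Tendsto (fun n => ∑ i ∈ Ico (r n) n, rankOdds k i) atTop (𝓝 (k * Real.log (1 / α))) := by
  have hr_atTop := tendsto_atTop_of_tendsto_div hα hr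
  have hharmonic := tendsto_harmonic_sub_harmonic hα ((tendsto_sub_atTop_nat k).comp hr_atTop)
    (tendsto_sub_atTop_nat k) (tendsto_sub_div_sub hα hr k)
  refine (hharmonic.const_mul (k : ℝ)).congr' ?_
  filter_upwards [hrn, hr_atTop.eventually_ge_atTop k] with n hn hkr
  exact (sum_rankOdds hkr hn).symm

theorem tendsto_esymm_rankOdds (hα : 0 < α) (hrn : ∀ᶠ n in atTop, r n ≤ n)
    (hr : Tendsto (fun n => (r n : ℝ) / n) atTop (𝓝 α)) (k d : ℕ) :
    Tendsto (fun n => ((Ico (r n) n).val.map (rankOdds k)).esymm d) atTop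
      (𝓝 ((k * Real.log (1 / α)) ^ d / d !)) := by
  have hr_atTop := tendsto_atTop_of_tendsto_div hα hr
  have hε : Tendsto (fun n => rankOdds k (r n)) atTop (𝓝 0) := by
    have hden : Tendsto (fun i : ℕ => (i : ℝ) + (1 - k)) atTop atTop :=
      tendsto_atTop_add_const_right _ _ tendsto_natCast_atTop_atTop
    simpa only [rankOdds, add_sub_assoc, Function.comp_def] using
      (hden.const_div_atTop (k : ℝ)).comp hr_atTop
  refine tendsto_esymm_of_tendsto_sum ?_ hε (tendsto_sum_rankOdds hα hrn hr k) d
  filter_upwards [hr_atTop.eventually_ge_atTop k] with n hkr i hi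
  have hkr' : (k : ℝ) ≤ r n := by exact_mod_cast hkr
  have hri : (r n : ℝ) ≤ i := by exact_mod_cast (mem_Ico.1 hi).1
  have hpos : (0 : ℝ) < r n + 1 - k := by linarith
  have hle : (r n : ℝ) + 1 - k ≤ i + 1 - k := by linarith
  exact ⟨div_nonneg k.cast_nonneg (hpos.trans_le hle).le,
    div_le_div_of_nonneg_left k.cast_nonneg hpos hle⟩

end Asymptotics

theorem stmt16_general {r : ℕ → ℕ} {α : ℝ} (hα : 0 < α) (hrn : ∀ᶠ n in atTop, r n ≤ n)
    (hr : Tendsto (fun n => (r n : ℝ) / n) atTop (𝓝 α)) (k d : ℕ) :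
    Tendsto (fun n => (#{π : Equiv.Perm (Fin n) | lateCount (r n) k π = d} : ℝ) / n !) atTop
      (𝓝 (α ^ k * (k * Real.log (1 / α)) ^ d / d !)) := by
  rw [mul_div_assoc]
  refine ((tendsto_descFactorial_div_descFactorial hα hr k).mul
    (tendsto_esymm_rankOdds hα hrn hr k d)).congr' ?_
  filter_upwards [hrn, (tendsto_atTop_of_tendsto_div hα hr).eventually_ge_atTop k] with n hn hkr
  exact (card_lateCount_eq_div_factorial hkr hn d).symm

/-- fix `m ≥ 2`, `d ≥ 0` and `α ∈ (0,1)`; let `r_n = ⌈αn⌉`. For a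
uniformly random permutation `π` of `Fin n` (position `i` carries value `π i`; 0-indexed,
so the paper's 1-indexed position `k` is index `k-1`), with relative rank
`p(i) = |{j ≤ i : π j ≥ π i}|`, let `S_n` be the number of positions `i` with
`r_n < i ≤ n` (1-indexed) and `p(i) ≤ m-1`. Then
`Pr(S_n = d) → α^{m-1} · ((m-1)·ln(1/α))^d / d!` as `n → ∞`. -/
theorem stmt16 (m d : ℕ) (hm : 2 ≤ m) (α : ℝ) (hα0 : 0 < α) (hα1 : α < 1) :
    Filter.Tendsto (fun n : ℕ =>
        ((Finset.univ.filter (fun π : Equiv.Perm (Fin n) =>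
            (Finset.univ.filter (fun i : Fin n =>
              ⌈α * (n : ℝ)⌉₊ ≤ (i : ℕ) ∧
              (Finset.univ.filter (fun j : Fin n => j ≤ i ∧ π i ≤ π j)).card ≤ m - 1)).card
            = d)).card : ℝ) / (Nat.factorial n : ℝ))
      Filter.atTop
      (nhds (α ^ (m - 1) * (((m : ℝ) - 1) * Real.log (1 / α)) ^ d / (Nat.factorial d : ℝ))) := by
  rw [← Nat.cast_pred (by omega : 0 < m)]
  exact stmt16_general hα0
    (.of_forall fun n => Nat.ceil_le.2 (mul_le_of_le_one_left n.cast_nonneg hα1.le))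
    ((tendsto_nat_ceil_mul_div_atTop hα0.le).comp tendsto_natCast_atTop_atTop) (m - 1) d
end

section
/- Let n ≥ 1, let v_1, …, v_n ≥ 0 be weights (identical-basestations case with m = 2 basestations), and let f : Fin n → Fin 2 be an allocation such that the set M_2 = {i : f(i) = 2} has size d ≥ 1 and contains some user of maximum weight (i.e., some i_0 ∈ M_2 with v_{i_0} = max_i v_i). Then d · TS(f, v) ≥ max_g TS(g, v), i.e., such an allocation is within a factor d of the optimal offline time-sharing utility. -/
/-- Time-sharing utility of an allocation `f` of `n` users to `m` basestations with
weights `w i j`: each basestation's contribution is the sum of weights of its users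
divided by its degree (empty basestations contribute `0`, via `0/0 = 0`). -/
noncomputable def TS {n m : ℕ} (f : Fin n → Fin m) (w : Fin n → Fin m → ℝ) : ℝ :=
  ∑ j : Fin m, (∑ i ∈ Finset.univ.filter (fun i => f i = j), w i j) /
    ((Finset.univ.filter (fun i => f i = j)).card : ℝ)

/-
Let `i₀` be a user of maximum weight. Both sides are compared with `v i₀ + 𝔼 i ∈ {i₀}ᶜ, v i`, the
utility of giving `i₀` a basestation of its own.

This is optimal: if a set `s` of users shares the basestation of `i₀`, it lowers the mean there by
`(∑ i ∈ s, (v i₀ - v i)) / (#s + 1)`, whereas merging `s` into the nonempty group `t` of the other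
basestation lowers the mean of `t` by only `(∑ i ∈ s, (𝔼 j ∈ t, v j - v i)) / (#s + #t)`.

It is at most `d` times the utility of `f`: multiplying by `d` turns the mean over `M₂` into a sum.
This sum contains `v i₀`, and the rest of it together with the mean over the complement of `M₂`
dominates the mean over `{i₀}ᶜ`.
-/

section Averages

open Finset
open scoped BigOperators

variable {ι K : Type*} {s t u : Finset ι} {i₀ : ι}

theorem erase_union_compl_of_mem [Fintype ι] [DecidableEq ι] (hi₀ : i₀ ∈ s) :
    s.erase i₀ ∪ sᶜ = {i₀}ᶜ := by
  ext i
  simp only [mem_union, mem_erase, mem_compl, mem_singleton]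
  grind

section OrderedSemifield

variable [Semifield K] [LinearOrder K] [IsStrictOrderedRing K] {v : ι → K}

theorem expect_le_sum_of_nonneg (hs : ∀ i ∈ s, 0 ≤ v i) : 𝔼 i ∈ s, v i ≤ ∑ i ∈ s, v i := by
  rw [← card_mul_expect s v]
  rcases s.eq_empty_or_nonempty with rfl | hne
  · simp
  · exact le_mul_of_one_le_left (expect_nonneg hs) (by exact_mod_cast hne.card_pos)

theorem sum_div_card_le_expect_of_subset (hsu : s ⊆ u) (hs : ∀ i ∈ s, 0 ≤ v i) :
    (∑ i ∈ s, v i) / #u ≤ 𝔼 i ∈ s, v i := by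
  rcases s.eq_empty_or_nonempty with rfl | hne
  · simp
  · rw [expect_eq_sum_div_card]
    exact div_le_div_of_nonneg_left (sum_nonneg hs) (by exact_mod_cast hne.card_pos)
      (by exact_mod_cast card_le_card hsu)

variable [DecidableEq ι]

theorem expect_union_le_of_nonneg (hs : ∀ i ∈ s, 0 ≤ v i) (ht : ∀ i ∈ t, 0 ≤ v i) :
    𝔼 i ∈ s ∪ t, v i ≤ 𝔼 i ∈ s, v i + 𝔼 i ∈ t, v i := by
  have hsum : ∑ i ∈ s ∪ t, v i ≤ ∑ i ∈ s, v i + ∑ i ∈ t, v i := by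
    rw [← sum_union_inter]
    exact le_add_of_nonneg_right (sum_nonneg fun i hi => hs i (mem_of_mem_inter_left hi))
  calc 𝔼 i ∈ s ∪ t, v i
      ≤ (∑ i ∈ s, v i) / #(s ∪ t) + (∑ i ∈ t, v i) / #(s ∪ t) := by
        rw [expect_eq_sum_div_card, ← add_div]
        gcongr
    _ ≤ 𝔼 i ∈ s, v i + 𝔼 i ∈ t, v i :=
        add_le_add (sum_div_card_le_expect_of_subset subset_union_left hs)
          (sum_div_card_le_expect_of_subset subset_union_right ht)

theorem add_expect_union_le_card_mul_expect_insert_add (hi₀ : i₀ ∉ s)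
    (hs : ∀ i ∈ s, 0 ≤ v i) (ht : ∀ i ∈ t, 0 ≤ v i) :
    v i₀ + 𝔼 i ∈ s ∪ t, v i ≤ #(insert i₀ s) * (𝔼 i ∈ insert i₀ s, v i + 𝔼 i ∈ t, v i) := by
  have hcard : (1 : K) ≤ #(insert i₀ s) := by exact_mod_cast (insert_nonempty i₀ s).card_pos
  calc v i₀ + 𝔼 i ∈ s ∪ t, v i
      ≤ v i₀ + (∑ i ∈ s, v i + 𝔼 i ∈ t, v i) := by
        gcongr
        exact (expect_union_le_of_nonneg hs ht).trans
          (add_le_add_left (expect_le_sum_of_nonneg hs) _)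
    _ = ∑ i ∈ insert i₀ s, v i + 𝔼 i ∈ t, v i := by rw [sum_insert hi₀, add_assoc]
    _ ≤ ∑ i ∈ insert i₀ s, v i + #(insert i₀ s) * 𝔼 i ∈ t, v i := by
        gcongr
        exact le_mul_of_one_le_left (expect_nonneg ht) hcard
    _ = #(insert i₀ s) * (𝔼 i ∈ insert i₀ s, v i + 𝔼 i ∈ t, v i) := by
        rw [mul_add, card_mul_expect]

end OrderedSemifield

variable [DecidableEq ι]

theorem expect_sub_expect_union [Field K] [CharZero K] (v : ι → K) (hst : Disjoint s t) :
    𝔼 i ∈ t, v i - 𝔼 i ∈ s ∪ t, v i = (∑ i ∈ s, (𝔼 j ∈ t, v j - v i)) / #(s ∪ t) := by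
  rcases (s ∪ t).eq_empty_or_nonempty with h | h
  · obtain ⟨rfl, rfl⟩ := union_eq_empty.mp h
    simp
  · have hcard : (#(s ∪ t) : K) ≠ 0 := by exact_mod_cast h.card_ne_zero
    rw [eq_div_iff hcard, sub_mul, expect_eq_sum_div_card (s ∪ t), div_mul_cancel₀ _ hcard,
      sum_union hst, ← card_mul_expect t v, card_union_of_disjoint hst, sum_sub_distrib, sum_const]
    simp only [nsmul_eq_mul, Nat.cast_add]
    ring

theorem expect_insert_add_expect_le_add_expect_union [Field K] [LinearOrder K]
    [IsStrictOrderedRing K] {v : ι → K} (hi₀ : i₀ ∉ s) (hst : Disjoint s t)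
    (hs : ∀ i ∈ s, 0 ≤ v i) (hmax : ∀ i ∈ s ∪ t, v i ≤ v i₀) :
    𝔼 i ∈ insert i₀ s, v i + 𝔼 i ∈ t, v i ≤ v i₀ + 𝔼 i ∈ s ∪ t, v i := by
  have hgap : ∀ i ∈ s, 0 ≤ v i₀ - v i := fun i hi => sub_nonneg.mpr (hmax i (mem_union_left t hi))
  have hloss : v i₀ - 𝔼 i ∈ insert i₀ s, v i = (∑ i ∈ s, (v i₀ - v i)) / #(insert i₀ s) := by
    simpa [union_comm s] using expect_sub_expect_union v (disjoint_singleton_right.mpr hi₀)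
  rcases t.eq_empty_or_nonempty with rfl | ht
  · have hloss_nonneg : 0 ≤ v i₀ - 𝔼 i ∈ insert i₀ s, v i :=
      hloss ▸ div_nonneg (sum_nonneg hgap) (Nat.cast_nonneg _)
    simpa using by linarith only [hloss_nonneg, expect_nonneg hs]
  · have ht_le : 𝔼 i ∈ t, v i ≤ v i₀ := expect_le ht fun i hi => hmax i (mem_union_right s hi)
    have hcard : #(insert i₀ s) ≤ #(s ∪ t) := by
      rw [card_insert_of_notMem hi₀, card_union_of_disjoint hst]
      exact Nat.add_le_add_left ht.card_pos _
    have hgain : 𝔼 i ∈ t, v i - 𝔼 i ∈ s ∪ t, v i ≤ v i₀ - 𝔼 i ∈ insert i₀ s, v i := calc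
      𝔼 i ∈ t, v i - 𝔼 i ∈ s ∪ t, v i
          = (∑ i ∈ s, (𝔼 j ∈ t, v j - v i)) / #(s ∪ t) := expect_sub_expect_union v hst
      _ ≤ (∑ i ∈ s, (v i₀ - v i)) / #(s ∪ t) := by gcongr
      _ ≤ (∑ i ∈ s, (v i₀ - v i)) / #(insert i₀ s) := by
          gcongr
          exact sum_nonneg hgap
      _ = v i₀ - 𝔼 i ∈ insert i₀ s, v i := hloss.symm
    linarith

end Averages

section TimeSharing

open Finset
open scoped BigOperators

theorem TS_eq_sum_expect {n m : ℕ} (f : Fin n → Fin m) (w : Fin n → Fin m → ℝ) :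
    TS f w = ∑ j, 𝔼 i with f i = j, w i j := by
  simp only [TS, expect_eq_sum_div_card]

theorem TS_eq_expect_add_expect_compl {n : ℕ} (f : Fin n → Fin 2) (v : Fin n → ℝ) (j : Fin 2) :
    TS f (fun i _ => v i) =
      𝔼 i with f i = j, v i + 𝔼 i ∈ ({i | f i = j} : Finset (Fin n))ᶜ, v i := by
  have hne_zero : ∀ k : Fin 2, ¬k = 0 ↔ k = 1 := by decide
  have hne_one : ∀ k : Fin 2, ¬k = 1 ↔ k = 0 := by decide
  rw [TS_eq_sum_expect, Fin.sum_univ_two]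
  fin_cases j
  · simp [compl_filter, hne_zero]
  · simp [compl_filter, hne_one, add_comm]

variable {n : ℕ} {v : Fin n → ℝ} {i₀ : Fin n}

theorem TS_le_add_expect_compl_singleton (hnn : ∀ i, 0 ≤ v i) (hmax : ∀ i, v i ≤ v i₀)
    (g : Fin n → Fin 2) : TS g (fun i _ => v i) ≤ v i₀ + 𝔼 i ∈ {i₀}ᶜ, v i := by
  have hi₀ : i₀ ∈ ({i | g i = g i₀} : Finset (Fin n)) := by simp
  rw [TS_eq_expect_add_expect_compl g v (g i₀), ← erase_union_compl_of_mem hi₀]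
  nth_rw 1 [← insert_erase hi₀]
  exact expect_insert_add_expect_le_add_expect_union (notMem_erase _ _)
    (disjoint_compl_right.mono_left (erase_subset _ _)) (fun i _ => hnn i) fun i _ => hmax i

theorem add_expect_compl_singleton_le_card_mul_TS (hnn : ∀ i, 0 ≤ v i) {f : Fin n → Fin 2}
    {j : Fin 2} (hf : f i₀ = j) :
    v i₀ + 𝔼 i ∈ {i₀}ᶜ, v i ≤ #{i | f i = j} * TS f (fun i _ => v i) := by
  have hi₀ : i₀ ∈ ({i | f i = j} : Finset (Fin n)) := by simpa using hf
  have h := add_expect_union_le_card_mul_expect_insert_add (notMem_erase i₀ {i | f i = j})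
    (fun i _ => hnn i) fun i (_ : i ∈ ({i | f i = j} : Finset (Fin n))ᶜ) => hnn i
  rwa [erase_union_compl_of_mem hi₀, insert_erase hi₀, ← TS_eq_expect_add_expect_compl] at h

end TimeSharing

/-- identical basestations, `m = 2` (basestation 2 of the paper is index
`1`). If the set `M₂ = {i : f i = 1}` has size `d ≥ 1` and contains a user of maximum
weight, then `d · TS(f, v)` is at least the optimal offline utility. -/
theorem stmt17 (n : ℕ) (hn : 1 ≤ n) (v : Fin n → ℝ) (hnn : ∀ i, 0 ≤ v i)
    (f : Fin n → Fin 2) (d : ℕ) (hd : 1 ≤ d)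
    (hcard : (Finset.univ.filter (fun i => f i = 1)).card = d)
    (hmax : ∃ i₀, f i₀ = 1 ∧ ∀ i, v i ≤ v i₀) :
    ∀ g : Fin n → Fin 2,
      TS g (fun i _ => v i) ≤ (d : ℝ) * TS f (fun i _ => v i) := by
  obtain ⟨i₀, hf, hmax⟩ := hmax
  intro g
  rw [← hcard]
  exact (TS_le_add_expect_compl_singleton hnn hmax g).trans
    (add_expect_compl_singleton_le_card_mul_TS hnn hf)
end

section
/- Let n ≥ 1, β > 1, and let s : Fin n → {1, …, n} be any bijection (an arbitrary arrival order). Define weights for m = 2 basestations by w i 1 = β^{s(i)} and w i 2 = β^{s(i) − 1/2}. Then the max-weight allocation f_max (which assigns each user to the basestation with the larger weight) assigns every user to basestation 1 and achieves TS(f_max, w) = (Σ_{k=1}^n β^k)/n, while max_g TS(g, w) ≥ β^n; consequently max_g TS(g, w) ≥ n·(1 − 1/β)·TS(f_max, w). In particular, even when only the arrival order is randomized, the competitive ratio of the max-weight association rule grows at least linearly in n. -/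
/-!
Max-weight crowds every user onto one basestation, where each gets only the average of the weights.
Isolating the best user and parking the others elsewhere collects at least the largest
weight; for weights `β, …, β ^ n` the average is `(β ^ n - 1) / (n (1 - 1 / β))`.
-/

open Finset

section Sums

theorem sum_range_succ_eq_sum_Icc {M : Type*} [AddCommMonoid M] (F : ℕ → M) (n : ℕ) :
    ∑ k ∈ range n, F (k + 1) = ∑ k ∈ Icc 1 n, F k := by
  rw [range_eq_Ico, sum_Ico_add' F 0 n 1, zero_add, Ico_add_one_right_eq_Icc]

theorem sum_perm_succ_eq_sum_Icc {M : Type*} [AddCommMonoid M] {n : ℕ} (s : Equiv.Perm (Fin n))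
    (F : ℕ → M) : ∑ i, F (s i + 1) = ∑ k ∈ Icc 1 n, F k :=
  calc ∑ i, F (s i + 1)
      = ∑ i : Fin n, F (i + 1) := Equiv.sum_comp s fun i => F (i + 1)
    _ = ∑ k ∈ range n, F (k + 1) := Fin.sum_univ_eq_sum_range (fun k => F (k + 1)) n
    _ = ∑ k ∈ Icc 1 n, F k := sum_range_succ_eq_sum_Icc F n

theorem one_sub_one_div_mul_sum_Icc_pow {K : Type*} [DivisionRing K] {x : K} (hx : x ≠ 0)
    (n : ℕ) : (1 - 1 / x) * ∑ k ∈ Icc 1 n, x ^ k = x ^ n - 1 :=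
  calc (1 - 1 / x) * ∑ k ∈ Icc 1 n, x ^ k
      = (1 - 1 / x) * (x * ∑ k ∈ range n, x ^ k) := by
        simp only [← sum_range_succ_eq_sum_Icc, pow_succ', mul_sum]
    _ = (x - 1) * ∑ k ∈ range n, x ^ k := by
        rw [← mul_assoc, sub_mul, one_mul, one_div_mul_cancel hx]
    _ = x ^ n - 1 := mul_geom_sum x n

end Sums

section TimeSharing

variable {n m : ℕ}

theorem TS_const (j : Fin m) (w : Fin n → Fin m → ℝ) :
    TS (fun _ => j) w = (∑ i, w i j) / n := by
  unfold TS
  rw [sum_eq_single_of_mem j (mem_univ j) fun k _ hk => by simp [hk.symm]]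
  simp

variable {w : Fin n → Fin m → ℝ}

theorem sum_div_card_le_TS (hw : ∀ i j, 0 ≤ w i j) (g : Fin n → Fin m) (j : Fin m) :
    (∑ i with g i = j, w i j) / (#{i | g i = j} : ℝ) ≤ TS g w :=
  single_le_sum (f := fun j => (∑ i with g i = j, w i j) / (#{i | g i = j} : ℝ))
    (fun j _ => div_nonneg (sum_nonneg fun i _ => hw i j) (Nat.cast_nonneg _)) (mem_univ j)

theorem le_TS_of_forall_eq_iff (hw : ∀ i j, 0 ≤ w i j) {g : Fin n → Fin m} {i : Fin n} {j : Fin m}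
    (hg : ∀ a, g a = j ↔ a = i) : w i j ≤ TS g w := by
  have huser : ({a | g a = j} : Finset (Fin n)) = {i} := by ext a; simp [hg]
  simpa only [huser, sum_singleton, card_singleton, Nat.cast_one, div_one]
    using sum_div_card_le_TS hw g j

theorem exists_le_TS [Nontrivial (Fin m)] (hw : ∀ i j, 0 ≤ w i j) (i : Fin n) (j : Fin m) :
    ∃ g : Fin n → Fin m, w i j ≤ TS g w := by
  obtain ⟨j', hj'⟩ := exists_ne j
  exact ⟨fun a => if a = i then j else j', le_TS_of_forall_eq_iff hw fun a => by simp [hj']⟩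

theorem stmt18_general [Nontrivial (Fin m)] (hn : 1 ≤ n) {β : ℝ} (hβ : 0 < β)
    (s : Equiv.Perm (Fin n)) (j₀ : Fin m)
    (hw₀ : ∀ i, w i j₀ = β ^ (((s i : ℕ) : ℝ) + 1))
    (hw : ∀ i, ∀ j ≠ j₀, 0 ≤ w i j ∧ w i j < w i j₀)
    (f : Fin n → Fin m) (hf : ∀ i j, w i j ≤ w i (f i)) :
    (∀ i, f i = j₀) ∧
    TS f w = (∑ k ∈ Icc 1 n, β ^ (k : ℝ)) / (n : ℝ) ∧
    (∃ g : Fin n → Fin m, β ^ (n : ℝ) ≤ TS g w) ∧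
    (∃ g : Fin n → Fin m, (n : ℝ) * (1 - 1 / β) * TS f w ≤ TS g w) := by
  have hw_pow (i) : w i j₀ = β ^ ((s i : ℕ) + 1) := by rw [hw₀, ← Real.rpow_natCast, Nat.cast_succ]
  have hw_nonneg (i j) : 0 ≤ w i j := by
    obtain rfl | hj := eq_or_ne j j₀
    · exact hw_pow i ▸ pow_nonneg hβ.le _
    · exact (hw i j hj).1
  have hf_eq (i) : f i = j₀ := by_contra fun h => (hf i j₀).not_gt (hw i _ h).2
  have hTS : TS f w = (∑ k ∈ Icc 1 n, β ^ k) / n := by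
    simp only [funext hf_eq, TS_const, hw_pow, sum_perm_succ_eq_sum_Icc s (β ^ ·)]
  obtain ⟨g, hg⟩ : ∃ g : Fin n → Fin m, β ^ n ≤ TS g w := by
    simpa [hw_pow, Nat.sub_add_cancel hn] using
      exists_le_TS hw_nonneg (s.symm ⟨n - 1, by omega⟩) j₀
  have hratio : n * (1 - 1 / β) * TS f w ≤ TS g w := by
    have hn₀ : (n : ℝ) ≠ 0 := by positivity
    calc n * (1 - 1 / β) * TS f w
        = (1 - 1 / β) * ∑ k ∈ Icc 1 n, β ^ k := by rw [hTS]; field_simp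
      _ = β ^ n - 1 := one_sub_one_div_mul_sum_Icc_pow hβ.ne' n
      _ ≤ TS g w := by linarith
  simp only [Real.rpow_natCast]
  exact ⟨hf_eq, hTS, ⟨g, hg⟩, g, hratio⟩

end TimeSharing

/-- max-weight association is bad even with only the arrival order
randomized. Let `β > 1` and let `s` be any bijection of the users (arrival order); user
`i` has paper-rank `s(i)+1 ∈ {1,…,n}` and weights `w i 1 = β^{s(i)+1}` and
`w i 2 = β^{(s(i)+1) - 1/2}` to the two basestations (0-indexed as `0` and `1`). Then any
max-weight allocation `f` sends every user to basestation `1`, achieves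
`TS(f,w) = (Σ_{k=1}^n β^k)/n`, while the offline optimum is at least `β^n`, and
consequently at least `n (1 - 1/β) · TS(f,w)`. -/
theorem stmt18 (n : ℕ) (hn : 1 ≤ n) (β : ℝ) (hβ : 1 < β) (s : Equiv.Perm (Fin n))
    (w : Fin n → Fin 2 → ℝ)
    (hw0 : ∀ i, w i 0 = β ^ (((s i : ℕ) : ℝ) + 1))
    (hw1 : ∀ i, w i 1 = β ^ (((s i : ℕ) : ℝ) + 1 - 1 / 2))
    (f : Fin n → Fin 2) (hf : ∀ i j, w i j ≤ w i (f i)) :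
    (∀ i, f i = 0) ∧
    TS f w = (∑ k ∈ Finset.Icc 1 n, β ^ (k : ℝ)) / (n : ℝ) ∧
    (∃ g : Fin n → Fin 2, β ^ (n : ℝ) ≤ TS g w) ∧
    (∃ g : Fin n → Fin 2, (n : ℝ) * (1 - 1 / β) * TS f w ≤ TS g w) := by
  refine stmt18_general hn (one_pos.trans hβ) s 0 hw0 (fun i j hj => ?_) f hf
  rw [Fin.eq_one_of_ne_zero j hj, hw0, hw1]
  exact ⟨by positivity, Real.rpow_lt_rpow_of_exponent_lt hβ (sub_lt_self _ one_half_pos)⟩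
end
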